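/- arXiv:2601.14158 — 2 statements merged into one kernel-verified Lean document; each statement's English description precedes it below -/
import Mathlib

section
/- Let 3 ≤ d < 24 and let C be a positive semidefinite matrix on ℂ^d⊗ℂ^d of rank r whose spectrum is (λ, …, λ, 0, …, 0) with exactly r copies of some λ > 0. If for every unitary U on ℂ^d⊗ℂ^d there exists a diagonal matrix D whose diagonal entries are a permutation of the eigenvalues of C (with multiplicity) with λ(tr_1[UCU*]) ⊕ λ(tr_2[UCU*]) ≺ λ(tr_1[D]) ⊕ λ(tr_2[D]), then one of the following holds: (i) r ≤ 3; (ii) r ≥ d² − 3; (iii) r = t·d for some 2 ≤ t ≤ d − 2. -/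
open Matrix Finset Kronecker
open scoped ComplexOrder

/-- The first partial trace of a matrix on `ℂ^{d1} ⊗ ℂ^{d2}` (index pairs `(i,s)` ordered
lexicographically): `(tr_1 C)_{s,t} = ∑_i C_{(i,s),(i,t)}`. -/
noncomputable def ptrace1 {d1 d2 : ℕ} (C : Matrix (Fin d1 × Fin d2) (Fin d1 × Fin d2) ℂ) :
    Matrix (Fin d2) (Fin d2) ℂ :=
  Matrix.of fun s t => ∑ i : Fin d1, C (i, s) (i, t)

/-- The second partial trace: `(tr_2 C)_{i,j} = ∑_s C_{(i,s),(j,s)}`. -/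
noncomputable def ptrace2 {d1 d2 : ℕ} (C : Matrix (Fin d1 × Fin d2) (Fin d1 × Fin d2) ℂ) :
    Matrix (Fin d1) (Fin d1) ℂ :=
  Matrix.of fun i j => ∑ s : Fin d2, C (i, s) (j, s)

/-- The sum of the `k` largest entries of the vector `x` (the largest value of a sum of `k`
entries of `x`), i.e. `∑_{i=1}^k x_i^↓`. -/
noncomputable def maxSum {ι : Type*} [Fintype ι] (x : ι → ℝ) (k : ℕ) : ℝ :=
  sSup {s : ℝ | ∃ A : Finset ι, A.card = k ∧ s = ∑ i ∈ A, x i}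

/-- `x ≺ y` (majorization): for every `k`, the sum of the `k` largest entries of `x` is at
most the sum of the `k` largest entries of `y`, and the total sums are equal. -/
def Majorizes {ι κ : Type*} [Fintype ι] [Fintype κ] (x : ι → ℝ) (y : κ → ℝ) : Prop :=
  (∀ k : ℕ, maxSum x k ≤ maxSum y k) ∧ ∑ i, x i = ∑ j, y j

/-- `x ≺_w y` (weak majorization). -/
def WeakMajorizes {ι κ : Type*} [Fintype ι] [Fintype κ] (x : ι → ℝ) (y : κ → ℝ) : Prop :=
  ∀ k : ℕ, maxSum x k ≤ maxSum y k

/-!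
The partial traces of a matrix in which only cells on no common line are superposed are diagonal,
with the column and row sums of its diagonal as entries. Hence conjugating `C` to `l` times the
projection onto the basis vectors of a set of `r` cells, one of them replaced by
`(e_p + e_q) / √2`, turns the hypothesis into combinatorics: moving half of a cell from `p` to `q`
must give line sums majorized by those of some set of `r` cells. Start from an `a × b` block,
`2 ≤ a ≤ b`, together with `e` cells prolonging its rows other than the first, and move half of a
cell of the first row to the end of another row. A majorant would have to fill a block of the same
area and semiperimeter, and then lacks mass on the rows other than the first. With the special case
`d = 4`, `r = 7` this excludes all `4 ≤ r ≤ d² / 2` except `(d, r) = (4, 8)`, and passing to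
complements of sets of cells gives the remaining ranks.
-/

lemma le_of_mul_le_mul_of_add_eq_add {a b x y : ℕ} (hab : a ≤ b) (hadd : x + y = a + b)
    (hmul : a * b ≤ x * y) : x ≤ b ∧ y ≤ b := by
  constructor <;> by_contra! h <;> zify at * <;> nlinarith

section Incidences

variable {α β : Type*}

lemma disjoint_product_of_forall_snd_notMem {R : Finset α} {K : Finset β} {E : Finset (α × β)}
    (hE : ∀ c ∈ E, c.2 ∉ K) : Disjoint (R ×ˢ K) E :=
  disjoint_right.2 fun c hc h => hE c hc (mem_product.1 h).2

variable [DecidableEq α] [DecidableEq β]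

/-- Number of incidences between the cells of `T` and the rows in `R` together with the columns
in `K`; a cell lying both on a row of `R` and on a column of `K` counts twice. -/
def incidences (T : Finset (α × β)) (R : Finset α) (K : Finset β) : ℕ :=
  #{c ∈ T | c.1 ∈ R} + #{c ∈ T | c.2 ∈ K}

/-- The row and column sums of `(1_A + 1_B) / 2` are weakly majorized by those of `1_T`. Both sides
are doubled, and the sum of the `k` largest entries is spelled out as a maximum over sets of `k`
lines. -/
def DominatesMean (T A B : Finset (α × β)) : Prop :=
  ∀ R K, ∃ R' K', #R' + #K' = #R + #K ∧
    incidences A R K + incidences B R K ≤ 2 * incidences T R' K'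

variable (α β) in
/-- Every weight arising from the indicator of a set of `r` cells by moving half of the mass of one
cell to an unoccupied cell in another row and another column is dominated by the indicator of some
set of `r` cells. -/
def TransfersDominated (r : ℕ) : Prop :=
  ∀ (A : Finset (α × β)) (p q : α × β), p ∈ A → q ∉ A → p.1 ≠ q.1 → p.2 ≠ q.2 → #A = r →
    ∃ T : Finset (α × β), #T = r ∧ DominatesMean T A (insert q (A.erase p))

lemma incidences_union {S T : Finset (α × β)} (h : Disjoint S T) (R : Finset α) (K : Finset β) :
    incidences (S ∪ T) R K = incidences S R K + incidences T R K := by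
  simp only [incidences, filter_union, card_union_of_disjoint (disjoint_filter_filter h)]
  ring

lemma incidences_insert_erase {A : Finset (α × β)} {p q : α × β} (hp : p ∈ A) (hq : q ∉ A)
    (R : Finset α) (K : Finset β) :
    incidences (insert q (A.erase p)) R K + incidences {p} R K =
      incidences A R K + incidences {q} R K := by
  have hB := incidences_union (disjoint_singleton_left.2 fun h => hq (mem_of_mem_erase h)) R K
    (S := {q}) (T := A.erase p)
  have hA := incidences_union (disjoint_singleton_left.2 (notMem_erase p A)) R K
  rw [← insert_eq] at hA hB
  rw [insert_erase hp] at hA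
  omega

lemma incidences_product (R R' : Finset α) (K K' : Finset β) :
    incidences (R ×ˢ K) R' K' = #(R ∩ R') * #K + #R * #(K ∩ K') := by
  rw [incidences, ← card_product, ← card_product]
  congr 2 <;> ext c <;> simp [and_right_comm, and_assoc]

lemma incidences_le (T : Finset (α × β)) (R : Finset α) (K : Finset β) :
    incidences T R K ≤ #T + #R * #K := by
  rw [incidences, ← card_union_add_card_inter, ← filter_or, ← filter_and, ← card_product]
  gcongr
  · exact filter_subset _ T
  · intro c hc
    simpa using (mem_filter.1 hc).2

lemma card_filter_fst_mem_le (T : Finset (α × β)) (R : Finset α) (K : Finset β) :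
    #{c ∈ T | c.1 ∈ R} ≤ #R * #K + #{c ∈ T | c.2 ∉ K} := by
  rw [← card_product]
  refine (card_le_card fun c hc => ?_).trans (card_union_le _ _)
  simp only [mem_union, mem_product, mem_filter] at hc ⊢
  tauto

lemma card_filter_snd_mem_le (T : Finset (α × β)) (R : Finset α) (K : Finset β) :
    #{c ∈ T | c.2 ∈ K} ≤ #R * #K + #{c ∈ T | c.1 ∉ R} := by
  rw [← card_product]
  refine (card_le_card fun c hc => ?_).trans (card_union_le _ _)
  simp only [mem_union, mem_product, mem_filter] at hc ⊢
  tauto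

lemma incidences_add_incidences_le (T : Finset (α × β)) {R : Finset α} {K : Finset β} {b : ℕ}
    (hR : #R ≤ b) (hK : #K ≤ b) (R' : Finset α) (K' : Finset β) :
    incidences T R' K' + incidences T R K ≤ (#R' + #K') * b + 2 * #T := by
  have hrows := card_filter_fst_mem_le T R' K
  have hcols := card_filter_snd_mem_le T R K'
  have hTR := card_filter_add_card_filter_not (s := T) fun c => c.1 ∈ R
  have hTK := card_filter_add_card_filter_not (s := T) fun c => c.2 ∈ K
  have hR'K : #R' * #K ≤ #R' * b := by gcongr
  have hRK' : #R * #K' ≤ b * #K' := by gcongr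
  unfold incidences
  linarith

-- `hRK` forces the lines of `T` realising it to cover a block of area at least `a * b` and
-- semiperimeter `a + b`; no line set can then meet `T` as often as `hRK'` demands.
theorem not_dominatesMean {T A B : Finset (α × β)} {R R' : Finset α} {K K' : Finset β} {a b : ℕ}
    (hab : a ≤ b) (hcard : #R + #K = a + b)
    (hRK : 2 * (#T + a * b) ≤ incidences A R K + incidences B R K + 1)
    (hRK' : 2 * ((#R' + #K') * b + #T) < incidences A R' K' + incidences B R' K' + 2 * (a * b)) :
    ¬ DominatesMean T A B := by
  intro h
  obtain ⟨R₁, K₁, hcard₁, h₁⟩ := h R K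
  obtain ⟨R₂, K₂, hcard₂, h₂⟩ := h R' K'
  have hblock : #T + a * b ≤ incidences T R₁ K₁ := by omega
  have harea : a * b ≤ #R₁ * #K₁ := by linarith [incidences_le T R₁ K₁]
  obtain ⟨hR₁, hK₁⟩ := le_of_mul_le_mul_of_add_eq_add hab (hcard₁.trans hcard) harea
  have hbound := incidences_add_incidences_le T hR₁ hK₁ R₂ K₂
  rw [hcard₂] at hbound
  omega

lemma incidences_product_union_self {R : Finset α} {K : Finset β} {E : Finset (α × β)}
    (hER : ∀ c ∈ E, c.1 ∈ R) (hEK : ∀ c ∈ E, c.2 ∉ K) :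
    incidences (R ×ˢ K ∪ E) R K = 2 * (#R * #K) + #E := by
  rw [incidences_union (disjoint_product_of_forall_snd_notMem hEK), incidences_product,
    inter_self, inter_self, ← two_mul, incidences, filter_true_of_mem hER,
    filter_false_of_mem hEK, card_empty, add_zero]

lemma incidences_product_union_rows {R J : Finset α} {K : Finset β} {E : Finset (α × β)}
    (hJ : J ⊆ R) (hEJ : ∀ c ∈ E, c.1 ∈ J) (hEK : ∀ c ∈ E, c.2 ∉ K) :
    incidences (R ×ˢ K ∪ E) J ∅ = #J * #K + #E := by
  rw [incidences_union (disjoint_product_of_forall_snd_notMem hEK), incidences_product,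
    inter_eq_right.2 hJ, incidences, filter_true_of_mem hEJ]
  simp

-- The test line sets are the sides of the block `R ×ˢ K` and the rows `J` extending beyond it.
theorem not_dominatesMean_block {T E : Finset (α × β)} {R J : Finset α} {K : Finset β}
    {p q : α × β} (hRK : #R ≤ #K) (hJR : J ⊆ R)
    (hEJ : ∀ c ∈ E, c.1 ∈ J) (hEK : ∀ c ∈ E, c.2 ∉ K) (hT : #T = #R * #K + #E)
    (hpR : p.1 ∈ R) (hpJ : p.1 ∉ J) (hpK : p.2 ∈ K) (hqJ : q.1 ∈ J) (hqK : q.2 ∉ K) (hqE : q ∉ E) :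
    ¬ DominatesMean T (R ×ˢ K ∪ E) (insert q ((R ×ˢ K ∪ E).erase p)) := by
  have hp : p ∈ R ×ˢ K ∪ E := mem_union_left _ (mem_product.2 ⟨hpR, hpK⟩)
  have hq : q ∉ R ×ˢ K ∪ E := by simp [hqK, hqE]
  have hA := incidences_product_union_self (fun c hc => hJR (hEJ c hc)) hEK
  have hA' := incidences_product_union_rows hJR hEJ hEK
  have hp_two : incidences {p} R K = 2 := by simp [incidences, filter_singleton, hpR, hpK]
  have hq_one : incidences {q} R K = 1 := by simp [incidences, filter_singleton, hJR hqJ, hqK]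
  have hp_zero : incidences {p} J ∅ = 0 := by simp [incidences, filter_singleton, hpJ]
  have hq_one' : incidences {q} J ∅ = 1 := by simp [incidences, filter_singleton, hqJ]
  have hB := incidences_insert_erase hp hq R K
  have hB' := incidences_insert_erase hp hq J ∅
  refine not_dominatesMean hRK rfl (R := R) (K := K) (R' := J) (K' := ∅) ?_ ?_
  · omega
  · rw [card_empty, add_zero]
    omega

theorem not_transfersDominated_of_block [Fintype α] [Fintype β] {a b e : ℕ} (hab : a ≤ b)
    (ha : a ≤ Fintype.card α) (he : e < (a - 1) * (Fintype.card β - b)) :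
    ¬ TransfersDominated α β (a * b + e) := by
  intro h
  have ha0 : 0 < a - 1 := Nat.pos_of_mul_pos_right (Nat.zero_lt_of_lt he)
  have hb : 0 < Fintype.card β - b := Nat.pos_of_mul_pos_left (Nat.zero_lt_of_lt he)
  obtain ⟨R, -, rfl⟩ := exists_subset_card_eq (s := (univ : Finset α)) ha
  obtain ⟨K, -, rfl⟩ := exists_subset_card_eq (s := (univ : Finset β)) (n := b)
    (by rw [card_univ]; omega)
  obtain ⟨i, hi⟩ := card_pos.1 (by omega : 0 < #R)
  obtain ⟨s, hs⟩ := card_pos.1 (by omega : 0 < #K)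
  rw [← card_erase_of_mem hi, ← card_compl, ← card_product] at he
  obtain ⟨E, hE, rfl⟩ := exists_subset_card_eq he.le
  obtain ⟨q, hq, hqE⟩ := exists_mem_notMem_of_card_lt_card he
  have hEJ : ∀ c ∈ E, c.1 ∈ R.erase i := fun c hc => (mem_product.1 (hE hc)).1
  have hEK : ∀ c ∈ E, c.2 ∉ K := fun c hc => mem_compl.1 (mem_product.1 (hE hc)).2
  obtain ⟨hqJ, hqK⟩ := mem_product.1 hq
  rw [mem_compl] at hqK
  obtain ⟨T, hT, hdom⟩ := h (R ×ˢ K ∪ E) (i, s) q (by simp [hi, hs]) (by simp [hqK, hqE])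
    (ne_of_mem_erase hqJ).symm (fun h => hqK (h ▸ hs))
    (by rw [card_union_of_disjoint (disjoint_product_of_forall_snd_notMem hEK), card_product])
  exact not_dominatesMean_block hab (erase_subset i R) hEJ hEK hT hi
    (notMem_erase i R) hs hqJ hqK hqE hdom

-- The moved cell completes the cross formed by the first row and the first column.
theorem not_transfersDominated_four_seven : ¬ TransfersDominated (Fin 4) (Fin 4) 7 := by
  intro h
  obtain ⟨T, hT, hdom⟩ := h {(0, 0), (0, 1), (0, 2), (0, 3), (1, 0), (2, 0), (1, 1)} (1, 1) (3, 0)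
    (by decide) (by decide) (by decide) (by decide) rfl
  exact not_dominatesMean (a := 1) (b := 1) (R := {0}) (K := {0}) (R' := {0, 1}) (K' := {0, 1})
    le_rfl rfl (by rw [hT]; decide) (by rw [hT]; decide) hdom

section Complement

variable [Fintype α] [Fintype β]

lemma incidences_add_incidences_compl_lines (T : Finset (α × β)) (R : Finset α) (K : Finset β) :
    incidences T R K + incidences T Rᶜ Kᶜ = 2 * #T := by
  have hR := card_filter_add_card_filter_not (s := T) fun c => c.1 ∈ R
  have hK := card_filter_add_card_filter_not (s := T) fun c => c.2 ∈ K
  simp only [incidences, mem_compl]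
  omega

lemma incidences_add_incidences_compl_cells (T : Finset (α × β)) (R : Finset α) (K : Finset β) :
    incidences T R K + incidences Tᶜ R K = #R * Fintype.card β + Fintype.card α * #K := by
  rw [← incidences_union disjoint_compl_right, union_compl, ← univ_product_univ,
    incidences_product, univ_inter, univ_inter, card_univ, card_univ]

lemma DominatesMean.compl (hαβ : Fintype.card α = Fintype.card β) {T A B : Finset (α × β)}
    (hA : #A = #T) (hB : #B = #T) (h : DominatesMean T A B) : DominatesMean Tᶜ Aᶜ Bᶜ := by
  have compl_eq (S : Finset (α × β)) (R : Finset α) (K : Finset β) :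
      incidences Sᶜ R K + 2 * #S = (#R + #K) * Fintype.card β + incidences S Rᶜ Kᶜ := by
    rw [← incidences_add_incidences_compl_lines S R K, add_mul, mul_comm #K]
    have := incidences_add_incidences_compl_cells S R K
    rw [hαβ] at this
    linarith
  intro R K
  obtain ⟨R', K', hcard, hle⟩ := h Rᶜ Kᶜ
  have hcompl : #R'ᶜ + #K'ᶜ = #R + #K := by
    have := card_add_card_compl R
    have := card_add_card_compl K
    have := card_add_card_compl R'
    have := card_add_card_compl K'
    omega
  refine ⟨R'ᶜ, K'ᶜ, hcompl, ?_⟩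
  have hT := compl_eq T R'ᶜ K'ᶜ
  rw [hcompl, compl_compl, compl_compl] at hT
  linarith [compl_eq A R K, compl_eq B R K]

theorem TransfersDominated.compl (hαβ : Fintype.card α = Fintype.card β) {r r' : ℕ}
    (hr : r + r' = Fintype.card (α × β)) (h : TransfersDominated α β r) :
    TransfersDominated α β r' := by
  intro A p q hp hq h₁ h₂ hA
  have hAc := card_add_card_compl A
  have hpq : p ≠ q := fun h => h₁ (congrArg Prod.fst h)
  obtain ⟨T, hT, hdom⟩ :=
    h Aᶜ q p (mem_compl.2 hq) (by simpa using hp) h₁.symm h₂.symm (by omega)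
  have hTc := card_add_card_compl T
  refine ⟨Tᶜ, by omega, ?_⟩
  have hcard : #(insert p (Aᶜ.erase q)) = #T := by
    rw [card_insert_of_notMem (by simp [hp]), card_erase_add_one (mem_compl.2 hq)]
    omega
  simpa [compl_insert, compl_erase, erase_insert_of_ne hpq.symm] using
    hdom.compl hαβ (by omega) hcard

end Complement

end Incidences

section Ranks

lemma exists_eq_mul_add_of_two_mul_le_sq {d r : ℕ} (h4 : 4 ≤ r) (hr : 2 * r ≤ d * d)
    (h47 : ¬ (d = 4 ∧ r = 7)) (h48 : ¬ (d = 4 ∧ r = 8)) :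
    ∃ a b e, a ≤ b ∧ e < (a - 1) * (d - b) ∧ r = a * b + e := by
  rcases lt_or_ge d 11 with hd | hd
  · have small : ∀ d ∈ Finset.range 11, ∀ r ∈ Icc 4 (d * d / 2),
        (d = 4 ∧ r = 7) ∨ (d = 4 ∧ r = 8) ∨ ∃ a ∈ Finset.range 11, ∃ b ∈ Ico a d,
          a * b ≤ r ∧ r - a * b < (a - 1) * (d - b) := by
      decide +kernel
    obtain h | h | ⟨a, -, b, hb, hle, hlt⟩ :=
      small d (Finset.mem_range.2 hd) r (mem_Icc.2 ⟨h4, by omega⟩)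
    · exact absurd h h47
    · exact absurd h h48
    · exact ⟨a, b, r - a * b, (mem_Ico.1 hb).1, hlt, by omega⟩
  · obtain ⟨a, e, hae, rfl⟩ : ∃ a e, e ≤ 2 * a ∧ r = a * a + e :=
      ⟨r.sqrt, r - r.sqrt * r.sqrt, by have := r.sqrt_le_add; omega, by have := r.sqrt_le; omega⟩
    have ha : 2 ≤ a := by nlinarith
    have had : a + 4 ≤ d := by nlinarith
    refine ⟨a, a, e, le_rfl, ?_, rfl⟩
    rcases ha.eq_or_lt with rfl | ha
    · omega
    · calc e < (a - 1) * 4 := by omega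
        _ ≤ (a - 1) * (d - a) := by gcongr; omega

theorem TransfersDominated.eq_four_and_eq_eight {d r : ℕ} (h : TransfersDominated (Fin d) (Fin d) r)
    (h4 : 4 ≤ r) (hr : 2 * r ≤ d * d) : d = 4 ∧ r = 8 := by
  by_contra h48
  by_cases h47 : d = 4 ∧ r = 7
  · obtain ⟨rfl, rfl⟩ := h47
    exact not_transfersDominated_four_seven h
  obtain ⟨a, b, e, hab, he, rfl⟩ := exists_eq_mul_add_of_two_mul_le_sq h4 hr h47 h48
  have hb : 0 < d - b := Nat.pos_of_mul_pos_left (Nat.zero_lt_of_lt he)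
  exact not_transfersDominated_of_block hab (by rw [Fintype.card_fin]; omega)
    (by rwa [Fintype.card_fin]) h

theorem TransfersDominated.card_cases {d r : ℕ} (h : TransfersDominated (Fin d) (Fin d) r) :
    r ≤ 3 ∨ d * d - 3 ≤ r ∨ (d = 4 ∧ r = 8) := by
  by_contra! ⟨h3, hd, h48⟩
  rcases le_total (2 * r) (d * d) with hr | hr
  · obtain ⟨rfl, rfl⟩ := h.eq_four_and_eq_eight (by omega) hr
    exact h48 rfl rfl
  · obtain ⟨rfl, hr'⟩ := (h.compl rfl (r' := d * d - r) (by simp; omega)).eq_four_and_eq_eight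
      (by omega) (by omega)
    omega

end Ranks


section MaxSum

lemma finite_setOf_sum_of_card_eq {ι : Type*} [Finite ι] (x : ι → ℝ) (k : ℕ) :
    {s : ℝ | ∃ A : Finset ι, #A = k ∧ s = ∑ i ∈ A, x i}.Finite :=
  (Set.finite_range fun A : Finset ι => ∑ i ∈ A, x i).subset
    fun _ ⟨A, _, hs⟩ => ⟨A, hs.symm⟩

variable {ι κ : Type*} [Fintype ι] [Fintype κ]

lemma sum_le_maxSum (x : ι → ℝ) (A : Finset ι) : ∑ i ∈ A, x i ≤ maxSum x #A :=
  le_csSup (finite_setOf_sum_of_card_eq x _).bddAbove ⟨A, rfl, rfl⟩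

lemma exists_sum_eq_maxSum (x : ι → ℝ) {k : ℕ} (hk : k ≤ Fintype.card ι) :
    ∃ A : Finset ι, #A = k ∧ maxSum x k = ∑ i ∈ A, x i := by
  obtain ⟨A, -, hA⟩ := exists_subset_card_eq (s := (univ : Finset ι)) hk
  exact Set.Nonempty.csSup_mem (s := {s | ∃ A : Finset ι, #A = k ∧ s = ∑ i ∈ A, x i})
    ⟨_, A, hA, rfl⟩ (finite_setOf_sum_of_card_eq x k)

lemma maxSum_comp_equiv (x : κ → ℝ) (e : ι ≃ κ) (k : ℕ) : maxSum (x ∘ e) k = maxSum x k := by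
  unfold maxSum
  congr 1
  ext s
  exact (Equiv.finsetCongr e).exists_congr fun A => by simp

lemma Majorizes.exists_sum_le {x : ι → ℝ} {y : κ → ℝ} (h : Majorizes x y)
    (hcard : Fintype.card ι ≤ Fintype.card κ) (A : Finset ι) :
    ∃ B : Finset κ, #B = #A ∧ ∑ i ∈ A, x i ≤ ∑ j ∈ B, y j := by
  obtain ⟨B, hB, hmax⟩ := exists_sum_eq_maxSum y (A.card_le_univ.trans hcard)
  exact ⟨B, hB, hmax ▸ (sum_le_maxSum x A).trans (h.1 #A)⟩

lemma majorizes_comp_equiv_iff {ι' κ' : Type*} [Fintype ι'] [Fintype κ'] {x : ι → ℝ} {y : κ → ℝ}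
    {e : ι' ≃ ι} {e' : κ' ≃ κ} : Majorizes (x ∘ e) (y ∘ e') ↔ Majorizes x y := by
  simp only [Majorizes, maxSum_comp_equiv, Function.comp_apply, Equiv.sum_comp]

end MaxSum

section Spectrum

lemma exists_perm_of_map_univ_eq {ι γ : Type*} [Fintype ι] {f g : ι → γ}
    (h : univ.val.map f = univ.val.map g) : ∃ σ : Equiv.Perm ι, f = g ∘ σ := by
  classical
  have hfiber (c : γ) : Nonempty ({i // f i = c} ≃ {i // g i = c}) := by
    have hcount := congrArg (Multiset.count c) h
    rw [Multiset.count_map, Multiset.count_map] at hcount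
    rw [← Fintype.card_eq, Fintype.card_subtype, Fintype.card_subtype]
    simpa [Finset.card, eq_comm] using hcount
  let e (c : γ) := (hfiber c).some
  exact ⟨Equiv.ofFiberEquiv e, funext fun i => (Equiv.ofFiberEquiv_map e i).symm⟩

variable {𝕜 n : Type*} [RCLike 𝕜] [Fintype n] [DecidableEq n] {A B : Matrix n n 𝕜}

open Polynomial in
lemma exists_perm_eigenvalues_eq_of_eq_diagonal {f : n → ℝ}
    (hA : A.IsHermitian) (hf : A = diagonal fun i => (f i : 𝕜)) :
    ∃ σ : Equiv.Perm n, hA.eigenvalues = f ∘ σ := by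
  have hroots : A.charpoly.roots = univ.val.map fun i => (f i : 𝕜) := by
    rw [hf, charpoly_diagonal, roots_prod _ _ (prod_ne_zero_iff.2 fun i _ => X_sub_C_ne_zero _)]
    simp
  apply exists_perm_of_map_univ_eq
  simpa [Multiset.map_map, Function.comp_def] using
    congrArg (Multiset.map RCLike.re) (hA.roots_charpoly_eq_eigenvalues.symm.trans hroots)

lemma exists_unitary_conj_eq_of_charpoly_eq (hA : A.IsHermitian) (hB : B.IsHermitian)
    (h : A.charpoly = B.charpoly) : ∃ U ∈ unitaryGroup n 𝕜, U * A * Uᴴ = B := by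
  have hspec := hA.conjStarAlgAut_star_eigenvectorUnitary
  rw [(hA.eigenvalues_eq_eigenvalues_iff hB).2 h] at hspec
  refine ⟨_, (hB.eigenvectorUnitary * star hA.eigenvectorUnitary).2, ?_⟩
  conv_rhs => rw [hB.spectral_theorem, ← hspec, ← Unitary.conjStarAlgAut_mul_apply]
  rw [Unitary.conjStarAlgAut_apply, star_eq_conjTranspose]

open Polynomial in
lemma charpoly_eq_of_eigenvalues_eq_ite (hA : A.IsHermitian) {l : ℝ} {F : Finset n}
    (hF : ∀ i, hA.eigenvalues i = if i ∈ F then l else 0) :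
    A.charpoly = (X - C (l : 𝕜)) ^ #F * X ^ (Fintype.card n - #F) := by
  have (i : n) : X - C (hA.eigenvalues i : 𝕜) = if i ∈ F then X - C (l : 𝕜) else X := by
    rw [hF]
    split_ifs <;> simp
  simp_rw [hA.charpoly_eq, this, prod_ite, prod_const]
  rw [filter_mem_eq_inter, univ_inter, filter_not, filter_mem_eq_inter, univ_inter,
    ← compl_eq_univ_sdiff, card_compl]

lemma eigenvalues_mul_self_of_mul_self_eq_smul (hA : A.IsHermitian) {l : ℝ}
    (hsq : A * A = (l : 𝕜) • A) (i : n) :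
    hA.eigenvalues i * hA.eigenvalues i = l * hA.eigenvalues i := by
  have h := congrArg (Unitary.conjStarAlgAut 𝕜 _ (star hA.eigenvectorUnitary)) hsq
  rw [map_mul, map_smul, hA.conjStarAlgAut_star_eigenvectorUnitary, diagonal_mul_diagonal] at h
  have hi := congrFun (congrFun h i) i
  simp only [diagonal_apply_eq, Matrix.smul_apply, Function.comp_apply, smul_eq_mul] at hi
  exact_mod_cast hi

lemma exists_eigenvalues_eq_ite_of_mul_self_eq_smul (hA : A.IsHermitian) {l : ℝ} (hl : l ≠ 0)
    (hsq : A * A = (l : 𝕜) • A) {r : ℕ} (htr : A.trace = r * l) :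
    ∃ F : Finset n, #F = r ∧ ∀ i, hA.eigenvalues i = if i ∈ F then l else 0 := by
  set F := univ.filter (hA.eigenvalues · = l) with hFdef
  have hF (i : n) : hA.eigenvalues i = if i ∈ F then l else 0 := by
    have := eigenvalues_mul_self_of_mul_self_eq_smul hA hsq i
    rw [mul_eq_mul_right_iff] at this
    split_ifs with h <;> simp_all
  have hsum : ∑ i, hA.eigenvalues i = #F * l := by
    rw [sum_congr rfl fun i _ => hF i, sum_ite_mem, univ_inter, sum_const, nsmul_eq_mul]
  have htr' : ∑ i, hA.eigenvalues i = r * l := by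
    rw [hA.trace_eq_sum_eigenvalues] at htr
    exact_mod_cast htr
  exact ⟨F, by exact_mod_cast mul_right_cancel₀ hl (hsum.symm.trans htr'), hF⟩

lemma exists_unitary_conj_eq_of_mul_self_eq_smul (hA : A.IsHermitian) (hB : B.IsHermitian)
    {l : ℝ} (hl : l ≠ 0) {F : Finset n} (hF : ∀ i, hA.eigenvalues i = if i ∈ F then l else 0)
    (hsq : B * B = (l : 𝕜) • B) (htr : B.trace = #F * l) :
    ∃ U ∈ unitaryGroup n 𝕜, U * A * Uᴴ = B := by
  obtain ⟨F', hcard, hF'⟩ := exists_eigenvalues_eq_ite_of_mul_self_eq_smul hB hl hsq htr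
  refine exists_unitary_conj_eq_of_charpoly_eq hA hB ?_
  rw [charpoly_eq_of_eigenvalues_eq_ite hA hF, charpoly_eq_of_eigenvalues_eq_ite hB hF', hcard]

end Spectrum

section Superposition

variable {n : Type*} [DecidableEq n] {S : Finset n} {p q : n}

/-- The orthogonal projection onto the span of the basis vectors `e_c`, `c ∈ S`, and of
`(e_p + e_q) / √2`, for distinct `p, q ∉ S`. Its diagonal is the mean of the indicators of
`insert p S` and `insert q S`. -/
noncomputable def superpositionProj (S : Finset n) (p q : n) : Matrix n n ℂ :=
  diagonal (fun c => if c ∈ S then 1 else 0) +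
    (1 / 2 : ℂ) • vecMulVec (Pi.single p 1 + Pi.single q 1) (Pi.single p 1 + Pi.single q 1)

lemma superpositionProj_isHermitian : (superpositionProj S p q).IsHermitian := by
  have hstar : star (Pi.single p 1 + Pi.single q 1 : n → ℂ) = Pi.single p 1 + Pi.single q 1 := by
    simp
  refine (isHermitian_diagonal_of_self_adjoint _ ?_).add ?_
  · ext c
    simp [apply_ite]
  · rw [IsHermitian, conjTranspose_smul, conjTranspose_vecMulVec, hstar]
    simp

lemma superpositionProj_apply_self (hpq : p ≠ q) (hp : p ∉ S) (hq : q ∉ S) (c : n) :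
    superpositionProj S p q c c =
      ((((if c ∈ insert p S then 1 else 0) + (if c ∈ insert q S then 1 else 0)) / 2 : ℝ) : ℂ) := by
  by_cases hcp : c = p
  · subst hcp
    simp [superpositionProj, vecMulVec_apply, hp, hpq]
  by_cases hcq : c = q
  · subst hcq
    simp [superpositionProj, vecMulVec_apply, hq, hpq.symm]
  by_cases hcS : c ∈ S <;> simp [superpositionProj, vecMulVec_apply, hcp, hcq, hcS]

lemma superpositionProj_apply_eq_zero {x y : n} (hxy : x ≠ y) (h : ¬ (x = p ∧ y = q))
    (h' : ¬ (x = q ∧ y = p)) : superpositionProj S p q x y = 0 := by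
  simp only [superpositionProj, Matrix.add_apply, diagonal_apply_ne _ hxy, zero_add,
    Matrix.smul_apply, vecMulVec_apply, Pi.add_apply, Pi.single_apply]
  split_ifs <;> simp_all

variable [Fintype n]

lemma superpositionProj_mul_self (hpq : p ≠ q) (hp : p ∉ S) (hq : q ∉ S) :
    superpositionProj S p q * superpositionProj S p q = superpositionProj S p q := by
  set u : n → ℂ := Pi.single p 1 + Pi.single q 1 with hu
  set D : Matrix n n ℂ := diagonal fun c => if c ∈ S then 1 else 0 with hD
  have hDD : D * D = D := by simp [hD]
  have hDu : D * vecMulVec u u = 0 := by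
    simp [hD, hu, mul_vecMulVec, mulVec_add, hp, hq]
  have huD : vecMulVec u u * D = 0 := by
    simp [hD, hu, vecMulVec_mul, add_vecMul, hp, hq]
  have huu : vecMulVec u u * vecMulVec u u = (2 : ℂ) • vecMulVec u u := by
    have hdot : u ⬝ᵥ u = 2 := by
      simp [hu, hpq, hpq.symm, one_add_one_eq_two]
    rw [vecMulVec_mul_vecMulVec, hdot, vecMulVec_smul]
  rw [superpositionProj, ← hu, ← hD, Matrix.add_mul, Matrix.mul_add, Matrix.mul_add,
    Matrix.smul_mul, Matrix.smul_mul, Matrix.mul_smul, Matrix.mul_smul, hDD, hDu, huD, huu]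
  simp

lemma trace_superpositionProj (hpq : p ≠ q) (hp : p ∉ S) :
    (superpositionProj S p q).trace = #(insert p S) := by
  rw [card_insert_of_notMem hp, superpositionProj, trace_add, trace_smul, trace_vecMulVec,
    trace_diagonal]
  simp [hpq, hpq.symm]
  norm_num

theorem exists_unitary_conj_eq_smul_superpositionProj {A : Matrix n n ℂ} (hA : A.IsHermitian)
    {l : ℝ} (hl : l ≠ 0) {F : Finset n} (hF : ∀ i, hA.eigenvalues i = if i ∈ F then l else 0)
    (hpq : p ≠ q) (hp : p ∉ S) (hq : q ∉ S) (hcard : #(insert p S) = #F) :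
    ∃ U ∈ unitaryGroup n ℂ, U * A * Uᴴ = (l : ℂ) • superpositionProj S p q := by
  refine exists_unitary_conj_eq_of_mul_self_eq_smul hA
    (superpositionProj_isHermitian.smul (Complex.conj_ofReal l)) hl hF ?_ ?_
  · rw [Matrix.smul_mul, Matrix.mul_smul, superpositionProj_mul_self hpq hp hq]
    rfl
  · rw [trace_smul, trace_superpositionProj hpq hp, hcard, smul_eq_mul, mul_comm]
    rfl

end Superposition

section LineSums

variable {α β : Type*} [Fintype α] [Fintype β]

/-- The column sums followed by the row sums of a weight on the cells of a grid. -/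
def lineSums (w : α × β → ℝ) : β ⊕ α → ℝ :=
  Sum.elim (fun s => ∑ i, w (i, s)) (fun i => ∑ s, w (i, s))

variable [DecidableEq α] [DecidableEq β]

lemma sum_lineSums (w : α × β → ℝ) (L : Finset (β ⊕ α)) :
    ∑ x ∈ L, lineSums w x =
      ∑ c with c.1 ∈ L.toRight, w c + ∑ c with c.2 ∈ L.toLeft, w c := by
  have hrows : univ.filter (fun c : α × β => c.1 ∈ L.toRight) = L.toRight ×ˢ univ := by ext; simp
  have hcols : univ.filter (fun c : α × β => c.2 ∈ L.toLeft) = univ ×ˢ L.toLeft := by ext; simp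
  rw [← toLeft_disjSum_toRight (u := L), sum_disjSum, toLeft_disjSum, toRight_disjSum, hrows, hcols,
    sum_product, sum_product_right, add_comm]
  simp only [lineSums, Sum.elim_inl, Sum.elim_inr]

lemma sum_lineSums_ite (l : ℝ) (T : Finset (α × β)) (L : Finset (β ⊕ α)) :
    ∑ x ∈ L, lineSums (fun c => if c ∈ T then l else 0) x =
      l * incidences T L.toRight L.toLeft := by
  simp [sum_lineSums, incidences, filter_inter, ← add_mul, mul_comm l]

lemma sum_lineSums_mean (l : ℝ) (A B : Finset (α × β)) (L : Finset (β ⊕ α)) :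
    ∑ x ∈ L, lineSums (fun c => l * (((if c ∈ A then 1 else 0) + (if c ∈ B then 1 else 0)) / 2)) x =
      l * ((incidences A L.toRight L.toLeft + incidences B L.toRight L.toLeft) / 2) := by
  simp only [sum_lineSums, ← mul_sum, ← sum_div, sum_add_distrib, sum_ite_mem, filter_inter,
    univ_inter, sum_const, nsmul_one, incidences, Nat.cast_add]
  ring

theorem dominatesMean_of_majorizes {l : ℝ} (hl : 0 < l) {T A B : Finset (α × β)}
    (h : Majorizes
      (lineSums fun c => l * (((if c ∈ A then 1 else 0) + (if c ∈ B then 1 else 0)) / 2))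
      (lineSums fun c => if c ∈ T then l else 0)) :
    DominatesMean T A B := by
  intro R K
  obtain ⟨L, hL, hle⟩ := h.exists_sum_le le_rfl (K.disjSum R)
  refine ⟨L.toRight, L.toLeft, ?_, ?_⟩
  · rw [add_comm, card_toLeft_add_card_toRight, hL, card_disjSum, add_comm]
  · rw [sum_lineSums_mean, sum_lineSums_ite, toRight_disjSum, toLeft_disjSum,
      mul_le_mul_iff_right₀ hl, div_le_iff₀' two_pos] at hle
    exact_mod_cast hle

end LineSums

section PartialTraces

variable {d1 d2 : ℕ} {M : Matrix (Fin d1 × Fin d2) (Fin d1 × Fin d2) ℂ}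

/-- Distinct cells on a common row or column of the grid are not coupled by `M`. This makes both
partial traces diagonal, while cells on no common line may still be in superposition. -/
def IsLineDiag (M : Matrix (Fin d1 × Fin d2) (Fin d1 × Fin d2) ℂ) : Prop :=
  ∀ x y, x ≠ y → x.1 = y.1 ∨ x.2 = y.2 → M x y = 0

/-- Some diagonal matrix with diagonal a permutation of `μ` has partial traces whose joint spectrum
majorizes that of the partial traces of `M`. The hermiticity proofs only serve to form the
eigenvalues. -/
def HasDiagonalMajorant (μ : Fin d1 × Fin d2 → ℝ)
    (M : Matrix (Fin d1 × Fin d2) (Fin d1 × Fin d2) ℂ) : Prop :=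
  ∃ D : Matrix (Fin d1 × Fin d2) (Fin d1 × Fin d2) ℂ, D.IsDiag ∧
    (∃ g : Equiv.Perm (Fin d1 × Fin d2), ∀ p, D p p = (μ (g p) : ℂ)) ∧
    ∀ (hM1 : (ptrace1 M).IsHermitian) (hM2 : (ptrace2 M).IsHermitian)
      (hD1 : (ptrace1 D).IsHermitian) (hD2 : (ptrace2 D).IsHermitian),
      Majorizes (Sum.elim hM1.eigenvalues hM2.eigenvalues)
        (Sum.elim hD1.eigenvalues hD2.eigenvalues)

lemma isLineDiag_of_isDiag (hM : M.IsDiag) : IsLineDiag M :=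
  fun _ _ hxy _ => hM hxy

variable {w : Fin d1 × Fin d2 → ℝ}

lemma IsLineDiag.ptrace1_eq_diagonal (hM : IsLineDiag M) (hw : ∀ c, M c c = (w c : ℂ)) :
    ptrace1 M = diagonal fun s => ((∑ i, w (i, s) : ℝ) : ℂ) := by
  ext s t
  rcases eq_or_ne s t with rfl | hst
  · simp [ptrace1, hw]
  · rw [ptrace1, of_apply, diagonal_apply_ne _ hst]
    exact sum_eq_zero fun i _ => hM (i, s) (i, t) (by simp [hst]) (.inl rfl)

lemma IsLineDiag.ptrace2_eq_diagonal (hM : IsLineDiag M) (hw : ∀ c, M c c = (w c : ℂ)) :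
    ptrace2 M = diagonal fun i => ((∑ s, w (i, s) : ℝ) : ℂ) := by
  ext i j
  rcases eq_or_ne i j with rfl | hij
  · simp [ptrace2, hw]
  · rw [ptrace2, of_apply, diagonal_apply_ne _ hij]
    exact sum_eq_zero fun s _ => hM (i, s) (j, s) (by simp [hij]) (.inr rfl)

lemma isHermitian_of_eq_diagonal_ofReal {n : Type*} [DecidableEq n] {A : Matrix n n ℂ} {f : n → ℝ}
    (h : A = diagonal fun i => (f i : ℂ)) : A.IsHermitian :=
  h ▸ isHermitian_diagonal_of_self_adjoint _ (funext fun i => Complex.conj_ofReal (f i))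

lemma IsLineDiag.exists_perm_eigenvalues_eq_lineSums (hM : IsLineDiag M)
    (hw : ∀ c, M c c = (w c : ℂ)) (h1 : (ptrace1 M).IsHermitian) (h2 : (ptrace2 M).IsHermitian) :
    ∃ e : Equiv.Perm (Fin d2 ⊕ Fin d1),
      Sum.elim h1.eigenvalues h2.eigenvalues = lineSums w ∘ e := by
  obtain ⟨σ, hσ⟩ := exists_perm_eigenvalues_eq_of_eq_diagonal h1 (hM.ptrace1_eq_diagonal hw)
  obtain ⟨τ, hτ⟩ := exists_perm_eigenvalues_eq_of_eq_diagonal h2 (hM.ptrace2_eq_diagonal hw)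
  refine ⟨σ.sumCongr τ, ?_⟩
  rw [hσ, hτ]
  ext (s | i) <;> rfl

theorem HasDiagonalMajorant.exists_majorizes {μ : Fin d1 × Fin d2 → ℝ}
    (h : HasDiagonalMajorant μ M) (hM : IsLineDiag M) (hw : ∀ c, M c c = (w c : ℂ)) :
    ∃ g : Equiv.Perm (Fin d1 × Fin d2), Majorizes (lineSums w) (lineSums (μ ∘ g)) := by
  obtain ⟨D, hD, ⟨g, hg⟩, hmaj⟩ := h
  have hD' := isLineDiag_of_isDiag hD
  have hM1 := isHermitian_of_eq_diagonal_ofReal (hM.ptrace1_eq_diagonal hw)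
  have hM2 := isHermitian_of_eq_diagonal_ofReal (hM.ptrace2_eq_diagonal hw)
  have hD1 := isHermitian_of_eq_diagonal_ofReal (hD'.ptrace1_eq_diagonal hg)
  have hD2 := isHermitian_of_eq_diagonal_ofReal (hD'.ptrace2_eq_diagonal hg)
  obtain ⟨e, he⟩ := hM.exists_perm_eigenvalues_eq_lineSums hw hM1 hM2
  obtain ⟨e', he'⟩ := hD'.exists_perm_eigenvalues_eq_lineSums hg hD1 hD2
  have hme := hmaj hM1 hM2 hD1 hD2
  rw [he, he'] at hme
  exact ⟨g, majorizes_comp_equiv_iff.1 hme⟩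

lemma isLineDiag_smul_superpositionProj (l : ℂ) (S : Finset (Fin d1 × Fin d2))
    {p q : Fin d1 × Fin d2} (h1 : p.1 ≠ q.1) (h2 : p.2 ≠ q.2) :
    IsLineDiag (l • superpositionProj S p q) := by
  intro x y hxy hline
  rw [Matrix.smul_apply, superpositionProj_apply_eq_zero hxy, smul_zero] <;>
    rintro ⟨rfl, rfl⟩
  · exact hline.elim h1 h2
  · exact hline.elim h1.symm h2.symm

theorem transfersDominated_of_hasDiagonalMajorant
    {C : Matrix (Fin d1 × Fin d2) (Fin d1 × Fin d2) ℂ} (hC : C.IsHermitian) {l : ℝ} (hl : 0 < l)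
    {F : Finset (Fin d1 × Fin d2)} (hF : ∀ c, hC.eigenvalues c = if c ∈ F then l else 0)
    (hmaj : ∀ U ∈ unitaryGroup (Fin d1 × Fin d2) ℂ,
      HasDiagonalMajorant hC.eigenvalues (U * C * Uᴴ)) :
    TransfersDominated (Fin d1) (Fin d2) #F := by
  intro A p q hp hq h1 h2 hA
  have hpq : p ≠ q := fun h => h1 (congrArg Prod.fst h)
  have hqS : q ∉ A.erase p := fun h => hq (mem_of_mem_erase h)
  obtain ⟨U, hU, hUP⟩ := exists_unitary_conj_eq_smul_superpositionProj hC hl.ne' hF hpq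
    (notMem_erase p A) hqS (by rw [insert_erase hp, hA])
  have hdiag (c : Fin d1 × Fin d2) : ((l : ℂ) • superpositionProj (A.erase p) p q) c c =
      ((l * (((if c ∈ A then 1 else 0) + (if c ∈ insert q (A.erase p) then 1 else 0)) / 2) : ℝ)
        : ℂ) := by
    rw [Matrix.smul_apply, superpositionProj_apply_self hpq (notMem_erase p A) hqS,
      insert_erase hp, smul_eq_mul, Complex.ofReal_mul]
  obtain ⟨g, hg⟩ := (hUP ▸ hmaj U hU).exists_majorizes
    (isLineDiag_smul_superpositionProj l _ h1 h2) hdiag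
  have hindicator : hC.eigenvalues ∘ g =
      fun c => if c ∈ F.map g.symm.toEmbedding then l else 0 := by
    ext c
    simp [hF]
  exact ⟨F.map g.symm.toEmbedding, card_map _, dominatesMean_of_majorizes hl (hindicator ▸ hg)⟩

end PartialTraces

lemma exists_finset_card_eq_of_equiv_fin {n : Type*} [DecidableEq n] {N r : ℕ} (hr : r ≤ N)
    (g : Fin N ≃ n) {x : n → ℝ} {l : ℝ}
    (hx : ∀ k : Fin N, x (g k) = if (k : ℕ) < r then l else 0) :
    ∃ F : Finset n, #F = r ∧ ∀ i, x i = if i ∈ F then l else 0 := by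
  refine ⟨(univ.filter fun k : Fin N => (k : ℕ) < r).map g.toEmbedding, ?_, fun i => ?_⟩
  · rw [card_map, Fin.card_filter_val_lt, min_eq_right hr]
  · simpa [mem_map_equiv] using hx (g.symm i)

theorem necessary_ranks_small_d_general {d r : ℕ} {C : Matrix (Fin d × Fin d) (Fin d × Fin d) ℂ}
    (hC : C.IsHermitian) {l : ℝ} (hl : 0 < l)
    (hspec : ∃ g : Fin (d * d) ≃ Fin d × Fin d,
      ∀ k : Fin (d * d), hC.eigenvalues (g k) = if (k : ℕ) < r then l else 0)
    (hmaj : ∀ U ∈ unitaryGroup (Fin d × Fin d) ℂ,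
      HasDiagonalMajorant hC.eigenvalues (U * C * Uᴴ)) :
    r ≤ 3 ∨ d * d - 3 ≤ r ∨ (d = 4 ∧ r = 8) := by
  obtain hr | hr := le_total (d * d) r
  · omega
  obtain ⟨g, hg⟩ := hspec
  obtain ⟨F, rfl, hF⟩ := exists_finset_card_eq_of_equiv_fin hr g hg
  exact (transfersDominated_of_hasDiagonalMajorant hC hl hF hmaj).card_cases

theorem necessary_ranks_small_d (d : ℕ) (hd3 : 3 ≤ d) (hd24 : d < 24) (r : ℕ)
    (C : Matrix (Fin d × Fin d) (Fin d × Fin d) ℂ) (hC : C.PosSemidef)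
    (hrank : C.rank = r) (l : ℝ) (hl : 0 < l)
    -- the spectrum of `C` consists of `r` copies of `l` and zeros
    (hspec : ∃ g : Fin (d * d) ≃ Fin d × Fin d,
      ∀ k : Fin (d * d), hC.1.eigenvalues (g k) = if (k : ℕ) < r then l else 0)
    -- majorization by a diagonal matrix holds over the whole unitary orbit
    (hmaj : ∀ U : Matrix (Fin d × Fin d) (Fin d × Fin d) ℂ,
      U ∈ Matrix.unitaryGroup (Fin d × Fin d) ℂ →
      ∃ D : Matrix (Fin d × Fin d) (Fin d × Fin d) ℂ, D.IsDiag ∧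
        (∃ g : Equiv.Perm (Fin d × Fin d), ∀ p, D p p = (hC.1.eigenvalues (g p) : ℂ)) ∧
        ∀ (hU1 : (ptrace1 (U * C * Uᴴ)).IsHermitian)
          (hU2 : (ptrace2 (U * C * Uᴴ)).IsHermitian)
          (hD1 : (ptrace1 D).IsHermitian) (hD2 : (ptrace2 D).IsHermitian),
          Majorizes (Sum.elim hU1.eigenvalues hU2.eigenvalues)
            (Sum.elim hD1.eigenvalues hD2.eigenvalues)) :
    r ≤ 3 ∨ d * d - 3 ≤ r ∨ ∃ t : ℕ, 2 ≤ t ∧ t ≤ d - 2 ∧ r = t * d := by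
  obtain h | h | ⟨rfl, rfl⟩ := necessary_ranks_small_d_general hC.1 hl hspec hmaj
  exacts [.inl h, .inr (.inl h), .inr (.inr ⟨2, le_rfl, le_rfl, rfl⟩)]
end

section
/- Let 2 ≤ d1 < d2 and let C be a Hermitian matrix on ℂ^{d1}⊗ℂ^{d2} of rank at most 3. Then λ(tr_1[C]) ⊕ λ(tr_2[C]) ≺ λ(tr_1[Λ]) ⊕ λ(tr_2[Λ]), where Λ is the diagonal matrix on ℂ^{d1}⊗ℂ^{d2} whose diagonal lists the eigenvalues of C in decreasing order (with respect to the lexicographic index ordering). -/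
open Matrix Finset Kronecker
open scoped ComplexOrder

/-!
In product eigenbases of `ptrace2 C` and `ptrace1 C`, the diagonal of `C` is `D *ᵥ λ(C)` with `D`
doubly stochastic, and the eigenvalues of the partial traces are the column and row sums of this
diagonal, read as a `d1 × d2` array. By Birkhoff's theorem it suffices to compare the line sums of
the array `Λ` with those of a rearrangement of `Λ`.

In `Λ` the positive entries sit at the start of the first row and the negative ones at the end of
the last row. Take `S` columns and `T` rows of a nonnegative array. Their line sums add up to at
most the total sum plus the sum over the `|S| * |T|` doubly covered cells. When at most three
entries are nonzero, the first row of `Λ` together with `|S| + |T| - 1` columns does at least as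
well, because `min (|S| * |T|) 3 ≤ |S| + |T| - 1`. Applying this to the positive part and the chosen
lines, and to the negative part and the remaining lines, yields two disjoint families of lines,
and any family of the right size separating them is good enough for `Λ`.
-/

section Majorization

variable {ι : Type*} [Fintype ι]

theorem maxSum_le_maxSum {x y : ι → ℝ}
    (h : ∀ A : Finset ι, ∃ A' : Finset ι, #A' = #A ∧ ∑ i ∈ A, x i ≤ ∑ i ∈ A', y i) (k : ℕ) :
    maxSum x k ≤ maxSum y k := by
  have bddAbove : BddAbove {s : ℝ | ∃ A : Finset ι, #A = k ∧ s = ∑ i ∈ A, y i} :=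
    ((Set.finite_range fun A : Finset ι => ∑ i ∈ A, y i).subset
      (by rintro s ⟨A, -, rfl⟩; exact ⟨A, rfl⟩)).bddAbove
  by_cases hk : ∃ A : Finset ι, #A = k
  · obtain ⟨A₀, hA₀⟩ := hk
    refine csSup_le ⟨_, A₀, hA₀, rfl⟩ ?_
    rintro s ⟨A, hA, rfl⟩
    obtain ⟨A', hA', hle⟩ := h A
    exact hle.trans (le_csSup bddAbove ⟨A', hA'.trans hA, rfl⟩)
  · -- for `k > card ι` both sides are the junk value `sSup ∅`
    have empty (z : ι → ℝ) : {s : ℝ | ∃ A : Finset ι, #A = k ∧ s = ∑ i ∈ A, z i} = ∅ :=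
      Set.eq_empty_of_forall_notMem fun _ ⟨A, hA, _⟩ => hk ⟨A, hA⟩
    simp only [maxSum, empty, le_refl]

theorem exists_perm_map_mulVec_le [DecidableEq ι] {D : Matrix ι ι ℝ}
    (hD : D ∈ doublyStochastic ℝ ι) (f : ι → ℝ) (φ : (ι → ℝ) →ₗ[ℝ] ℝ) :
    ∃ σ : Equiv.Perm ι, φ (D *ᵥ f) ≤ φ (f ∘ σ) := by
  have hD' : D ∈ convexHull ℝ {M | ∃ σ : Equiv.Perm ι, σ.permMatrix ℝ = M} := by
    rwa [← doublyStochastic_eq_convexHull_permMatrix]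
  let ψ : Matrix ι ι ℝ →ₗ[ℝ] ℝ := φ ∘ₗ (mulVecBilin ℝ ℝ).flip f
  obtain ⟨_, ⟨σ, rfl⟩, hσ⟩ :=
    (ψ.convexOn convex_univ).exists_ge_of_mem_convexHull (Set.subset_univ _) hD'
  exact ⟨σ, by simpa [ψ, permMatrix_mulVec] using hσ⟩

end Majorization

section Marginals

variable {m n : Type*} [Fintype m] [Fintype n]

/-- The column sums (indexed by `n`) and the row sums (indexed by `m`) of an `m × n` array: the
spectra of the two partial traces of a diagonal matrix, in the order in which they are listed in
`λ(tr_1) ⊕ λ(tr_2)`. -/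
def marginals : (m × n → ℝ) →ₗ[ℝ] (n ⊕ m → ℝ) where
  toFun f := Sum.elim (fun s => ∑ i, f (i, s)) (fun i => ∑ s, f (i, s))
  map_add' f g := by ext (s | i) <;> simp [sum_add_distrib]
  map_smul' c f := by ext (s | i) <;> simp [mul_sum]

theorem marginals_inl (f : m × n → ℝ) (s : n) : marginals f (Sum.inl s) = ∑ i, f (i, s) := rfl

theorem marginals_inr (f : m × n → ℝ) (i : m) : marginals f (Sum.inr i) = ∑ s, f (i, s) := rfl

theorem marginals_nonneg {f : m × n → ℝ} (hf : 0 ≤ f) : 0 ≤ marginals f := by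
  rintro (s | i)
  · exact sum_nonneg fun i _ => hf (i, s)
  · exact sum_nonneg fun s _ => hf (i, s)

theorem sum_marginals (f : m × n → ℝ) : ∑ b, marginals f b = 2 * ∑ z, f z := by
  simp only [Fintype.sum_sum_type, marginals_inl, marginals_inr, Fintype.sum_prod_type]
  rw [sum_comm, two_mul]

theorem sum_marginals_le {f : m × n → ℝ} (hf : 0 ≤ f) (A : Finset (n ⊕ m)) :
    ∑ b ∈ A, marginals f b ≤ ∑ z, f z + ∑ z ∈ A.toRight ×ˢ A.toLeft, f z := by
  classical
  calc ∑ b ∈ A, marginals f b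
      = ∑ z ∈ univ ×ˢ A.toLeft, f z + ∑ z ∈ A.toRight ×ˢ univ, f z := by
        rw [← toLeft_disjSum_toRight (u := A), sum_disjSum, toLeft_disjSum, toRight_disjSum,
          sum_product_right, sum_product]
        simp only [marginals_inl, marginals_inr]
    _ = ∑ z ∈ univ ×ˢ A.toLeft ∪ A.toRight ×ˢ univ, f z + ∑ z ∈ A.toRight ×ˢ A.toLeft, f z := by
        rw [← sum_union_inter, product_inter_product, univ_inter, inter_univ]
    _ ≤ ∑ z, f z + ∑ z ∈ A.toRight ×ˢ A.toLeft, f z := by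
        gcongr
        · exact fun z _ _ => hf z
        · exact subset_univ _

theorem sum_add_sum_le_sum_marginals {f : m × n → ℝ} (hf : 0 ≤ f) {i₀ : m}
    (hrow : ∀ i s, f (i, s) ≠ 0 → i = i₀) (L : Finset n) :
    ∑ z, f z + ∑ s ∈ L, f (i₀, s) ≤ ∑ b ∈ L.disjSum {i₀}, marginals f b := by
  have total : ∑ z, f z = ∑ s, f (i₀, s) := by
    rw [Fintype.sum_prod_type]
    refine Fintype.sum_eq_single i₀ fun i hi => sum_eq_zero fun s _ => ?_
    exact not_not.mp fun h => hi (hrow i s h)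
  rw [sum_disjSum, sum_singleton, marginals_inr, total, add_comm]
  gcongr with s
  exact single_le_sum (fun i _ => hf (i, s)) (mem_univ i₀)

theorem min_mul_three_lt_add {s t : ℕ} (h : 0 < s + t) : min (s * t) 3 < s + t := by
  rcases le_or_gt (s + t) 3 with hst | hst
  · have hs : s ≤ 3 := by omega
    interval_cases s <;> omega
  · omega

theorem exists_sum_marginals_comp_perm_le {f : m × n → ℝ} (hf : 0 ≤ f) {i₀ : m} {R : Finset n}
    (hR : #R ≤ 3) (hsupp : ∀ i s, f (i, s) ≠ 0 → i = i₀ ∧ s ∈ R) (σ : Equiv.Perm (m × n))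
    (A : Finset (n ⊕ m)) :
    ∃ B ⊆ R.disjSum {i₀}, #B ≤ #A ∧ ∑ b ∈ A, marginals (f ∘ σ) b ≤ ∑ b ∈ B, marginals f b := by
  classical
  rcases A.eq_empty_or_nonempty with rfl | hA
  · exact ⟨∅, empty_subset _, by simp⟩
  let Z := (A.toRight ×ˢ A.toLeft).map σ.toEmbedding
  let L := {s ∈ R | (i₀, s) ∈ Z}
  have row_subset : L.map (Function.Embedding.sectR i₀ n) ⊆ Z := by
    simp only [subset_iff, mem_map]
    rintro _ ⟨s, hs, rfl⟩
    exact (mem_filter.mp hs).2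
  have card_L : #L < #A := by
    have hLR : #L ≤ 3 := (card_filter_le _ _).trans hR
    have hLZ : #L ≤ #A.toLeft * #A.toRight := by
      simpa [Z, mul_comm] using card_le_card row_subset
    have hcard := A.card_toLeft_add_card_toRight
    have := min_mul_three_lt_add (hcard ▸ hA.card_pos)
    omega
  have sum_Z : ∑ z ∈ A.toRight ×ˢ A.toLeft, (f ∘ σ) z = ∑ s ∈ L, f (i₀, s) := by
    calc ∑ z ∈ A.toRight ×ˢ A.toLeft, (f ∘ σ) z = ∑ z ∈ Z, f z := by
          rw [sum_map]; rfl
      _ = ∑ z ∈ L.map (Function.Embedding.sectR i₀ n), f z := by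
          refine (sum_subset row_subset fun ⟨i, s⟩ hz hzL => not_not.mp fun hne => hzL ?_).symm
          obtain ⟨rfl, hs⟩ := hsupp i s hne
          exact mem_map_of_mem _ (mem_filter.mpr ⟨hs, hz⟩)
      _ = ∑ s ∈ L, f (i₀, s) := sum_map _ _ _
  refine ⟨L.disjSum {i₀}, disjSum_mono (filter_subset _ _) subset_rfl, ?_, ?_⟩
  · rw [card_disjSum, card_singleton]
    exact card_L
  · calc ∑ b ∈ A, marginals (f ∘ σ) b
        ≤ ∑ z, (f ∘ σ) z + ∑ z ∈ A.toRight ×ˢ A.toLeft, (f ∘ σ) z :=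
          sum_marginals_le (fun z => hf (σ z)) A
      _ = ∑ z, f z + ∑ s ∈ L, f (i₀, s) := by
          rw [sum_Z]; exact congrArg (· + _) (Equiv.sum_comp σ f)
      _ ≤ ∑ b ∈ L.disjSum {i₀}, marginals f b :=
          sum_add_sum_le_sum_marginals hf (fun i s h => (hsupp i s h).1) L

variable {f : m × n → ℝ} {i₁ i₂ : m} {R₁ R₂ : Finset n}

theorem exists_card_eq_sum_marginals_comp_perm_le
    (hi : i₁ ≠ i₂) (hR : Disjoint R₁ R₂) (hR₁ : #R₁ ≤ 3) (hR₂ : #R₂ ≤ 3)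
    (hpos : ∀ i s, 0 < f (i, s) → i = i₁ ∧ s ∈ R₁)
    (hneg : ∀ i s, f (i, s) < 0 → i = i₂ ∧ s ∈ R₂)
    (σ : Equiv.Perm (m × n)) (A : Finset (n ⊕ m)) :
    ∃ A' : Finset (n ⊕ m), #A' = #A ∧
      ∑ b ∈ A, marginals (f ∘ σ) b ≤ ∑ b ∈ A', marginals f b := by
  classical
  have marginals_eq (g : m × n → ℝ) (b : n ⊕ m) :
      marginals g b = marginals g⁺ b - marginals g⁻ b := by
    rw [← Pi.sub_apply, ← map_sub, posPart_sub_negPart]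
  have sum_add_compl (g : m × n → ℝ) (B : Finset (n ⊕ m)) :
      ∑ b ∈ B, marginals g b + ∑ b ∈ Bᶜ, marginals g b = 2 * ∑ z, g z := by
    rw [sum_add_sum_compl, sum_marginals]
  obtain ⟨B₁, hB₁, card_B₁, hle₁⟩ := exists_sum_marginals_comp_perm_le (posPart_nonneg f) hR₁
    (fun i s hs => hpos i s (posPart_pos_iff.mp (lt_of_le_of_ne (posPart_nonneg _) hs.symm))) σ A
  obtain ⟨B₂, hB₂, card_B₂, hle₂⟩ := exists_sum_marginals_comp_perm_le (negPart_nonneg f) hR₂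
    (fun i s hs => hneg i s (negPart_pos_iff.mp (lt_of_le_of_ne (negPart_nonneg _) hs.symm))) σ Aᶜ
  have hB : B₁ ⊆ B₂ᶜ := by
    rw [subset_compl_iff_disjoint_right]
    refine Disjoint.mono hB₁ hB₂ (disjoint_left.mpr ?_)
    rintro (s | i) h₁ h₂
    · exact disjoint_left.mp hR (inl_mem_disjSum.mp h₁) (inl_mem_disjSum.mp h₂)
    · exact hi ((mem_singleton.mp (inr_mem_disjSum.mp h₁)).symm.trans
        (mem_singleton.mp (inr_mem_disjSum.mp h₂)))
  have card_A_le : #A ≤ #B₂ᶜ := by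
    rw [card_compl] at card_B₂ ⊢
    have := card_le_univ A
    have := card_le_univ B₂
    omega
  obtain ⟨A', hB₁A', hA'B₂, card_A'⟩ := exists_subsuperset_card_eq hB card_B₁ card_A_le
  refine ⟨A', card_A', ?_⟩
  have pos_le : ∑ b ∈ B₁, marginals f⁺ b ≤ ∑ b ∈ A', marginals f⁺ b :=
    sum_le_sum_of_subset_of_nonneg hB₁A' fun b _ _ => marginals_nonneg (posPart_nonneg f) b
  have neg_le : ∑ b ∈ B₂, marginals f⁻ b ≤ ∑ b ∈ A'ᶜ, marginals f⁻ b :=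
    sum_le_sum_of_subset_of_nonneg (subset_compl_comm.mp hA'B₂)
      fun b _ _ => marginals_nonneg (negPart_nonneg f) b
  have sum_neg_comp : ∑ z, (f⁻ ∘ σ) z = ∑ z, f⁻ z := Equiv.sum_comp σ f⁻
  have compl_A := sum_add_compl (f⁻ ∘ σ) A
  have compl_A' := sum_add_compl f⁻ A'
  calc ∑ b ∈ A, marginals (f ∘ σ) b
      = ∑ b ∈ A, marginals (f⁺ ∘ σ) b - ∑ b ∈ A, marginals (f⁻ ∘ σ) b := by
        simp only [marginals_eq (f ∘ σ), sum_sub_distrib]; rfl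
    _ ≤ ∑ b ∈ A', marginals f⁺ b - ∑ b ∈ A', marginals f⁻ b := by linarith
    _ = ∑ b ∈ A', marginals f b := by simp only [marginals_eq f, sum_sub_distrib]

theorem majorizes_marginals_mulVec [DecidableEq m] [DecidableEq n]
    (hi : i₁ ≠ i₂) (hR : Disjoint R₁ R₂) (hR₁ : #R₁ ≤ 3) (hR₂ : #R₂ ≤ 3)
    (hpos : ∀ i s, 0 < f (i, s) → i = i₁ ∧ s ∈ R₁)
    (hneg : ∀ i s, f (i, s) < 0 → i = i₂ ∧ s ∈ R₂)
    {D : Matrix (m × n) (m × n) ℝ} (hD : D ∈ doublyStochastic ℝ (m × n)) :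
    Majorizes (marginals (D *ᵥ f)) (marginals f) := by
  refine ⟨maxSum_le_maxSum fun A => ?_, ?_⟩
  · obtain ⟨σ, hσ⟩ :=
      exists_perm_map_mulVec_le hD f ((∑ b ∈ A, LinearMap.proj b) ∘ₗ marginals)
    obtain ⟨A', card_A', hle⟩ :=
      exists_card_eq_sum_marginals_comp_perm_le hi hR hR₁ hR₂ hpos hneg σ A
    exact ⟨A', card_A', le_trans (by simpa using hσ) hle⟩
  · rw [sum_marginals, sum_marginals, sum_mulVec_of_mem_doublyStochastic hD]

end Marginals

section Antitone

variable {n : ℕ} {μ : Fin n → ℝ}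

theorem val_lt_card_pos_of_antitone (hμ : Antitone μ) {j : Fin n} (hj : 0 < μ j) :
    (j : ℕ) < #{k | 0 < μ k} := by
  have : Iic j ⊆ ({k | 0 < μ k} : Finset (Fin n)) := fun k hk =>
    mem_filter.mpr ⟨mem_univ k, hj.trans_le (hμ (mem_Iic.mp hk))⟩
  simpa [Nat.succ_le_iff] using card_le_card this

theorem le_val_add_card_neg_of_antitone (hμ : Antitone μ) {j : Fin n} (hj : μ j < 0) :
    n ≤ j + #{k | μ k < 0} := by
  have : Ici j ⊆ ({k | μ k < 0} : Finset (Fin n)) := fun k hk =>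
    mem_filter.mpr ⟨mem_univ k, (hμ (mem_Ici.mp hk)).trans_lt hj⟩
  have := card_le_card this
  rw [Fin.card_Ici] at this
  omega

variable {d1 d2 : ℕ}

theorem fst_eq_zero_and_snd_lt_of_finProdFinEquiv_lt {p : ℕ} (hp : p ≤ d2) {i : Fin d1}
    {s : Fin d2} (h : (finProdFinEquiv (i, s) : ℕ) < p) : (i : ℕ) = 0 ∧ (s : ℕ) < p := by
  rw [finProdFinEquiv_apply_val] at h
  have hi : (i : ℕ) = 0 := by
    by_contra hne
    have := Nat.le_mul_of_pos_right d2 (Nat.pos_of_ne_zero hne)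
    simp only at h
    omega
  exact ⟨hi, by simpa [hi] using h⟩

theorem fst_add_one_eq_and_le_snd_add_of_le_finProdFinEquiv_add {q : ℕ} (hq : q ≤ d2)
    {i : Fin d1} {s : Fin d2} (h : d1 * d2 ≤ finProdFinEquiv (i, s) + q) :
    (i : ℕ) + 1 = d1 ∧ d2 ≤ s + q := by
  rw [finProdFinEquiv_apply_val] at h
  simp only at h
  have hi : (i : ℕ) + 1 = d1 := by
    by_contra hne
    have : (i + 2) * d2 ≤ d1 * d2 := Nat.mul_le_mul_right d2 (by omega)
    have : (i + 2) * d2 = d2 * i + 2 * d2 := by ring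
    omega
  have : d1 * d2 = d2 * i + d2 := by
    calc d1 * d2 = (i + 1) * d2 := by rw [hi]
      _ = d2 * i + d2 := by ring
  exact ⟨hi, by omega⟩

theorem card_filter_le_val_add_le (d q : ℕ) : #{s : Fin d | d ≤ s + q} ≤ q := by
  calc #{s : Fin d | d ≤ s + q} = #{s : Fin d | (Fin.revPerm s : ℕ) < q} := by
        congr 1; ext s; simp only [mem_filter, mem_univ, true_and, Fin.revPerm_apply, Fin.val_rev]
        omega
    _ = #{s : Fin d | (s : ℕ) < q} :=
        card_equiv Fin.revPerm (by simp)
    _ ≤ q := by rw [Fin.card_filter_val_lt]; exact min_le_right _ _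

theorem majorizes_marginals_mulVec_of_antitone (hd1 : 2 ≤ d1) {μ : Fin (d1 * d2) → ℝ}
    (hμ : Antitone μ) (hpos : #{k | 0 < μ k} ≤ 3) (hneg : #{k | μ k < 0} ≤ 3)
    (hcard : #{k | 0 < μ k} + #{k | μ k < 0} ≤ d2)
    {D : Matrix (Fin d1 × Fin d2) (Fin d1 × Fin d2) ℝ}
    (hD : D ∈ doublyStochastic ℝ (Fin d1 × Fin d2)) :
    Majorizes (marginals (D *ᵥ (μ ∘ finProdFinEquiv))) (marginals (μ ∘ finProdFinEquiv)) := by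
  set p := #{k | 0 < μ k}
  set q := #{k | μ k < 0}
  have h0 : 0 < d1 := by omega
  have hlast : d1 - 1 < d1 := by omega
  have hne : (⟨0, h0⟩ : Fin d1) ≠ ⟨d1 - 1, hlast⟩ := by
    rw [ne_eq, Fin.mk.injEq]; omega
  refine majorizes_marginals_mulVec (R₁ := {s : Fin d2 | (s : ℕ) < p})
    (R₂ := {s : Fin d2 | d2 ≤ s + q}) hne ?_ ?_ ?_ ?_ ?_ hD
  · exact disjoint_filter.mpr fun s _ _ => by omega
  · rw [Fin.card_filter_val_lt]; omega
  · exact (card_filter_le_val_add_le d2 q).trans hneg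
  · intro i s his
    obtain ⟨hi, hs⟩ := fst_eq_zero_and_snd_lt_of_finProdFinEquiv_lt (by omega : p ≤ d2)
      (val_lt_card_pos_of_antitone hμ his)
    exact ⟨Fin.ext hi, by simpa using hs⟩
  · intro i s his
    obtain ⟨hi, hs⟩ := fst_add_one_eq_and_le_snd_add_of_le_finProdFinEquiv_add
      (by omega : q ≤ d2) (le_val_add_card_neg_of_antitone hμ his)
    exact ⟨Fin.ext (by simp only; omega), by simpa using hs⟩

end Antitone

section Hermitian

variable {𝕜 n : Type*} [RCLike 𝕜] [Fintype n] [DecidableEq n]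

theorem map_norm_sq_mem_doublyStochastic {W : Matrix n n 𝕜} (hW : W ∈ unitaryGroup n 𝕜) :
    W.map (fun z => ‖z‖ ^ 2) ∈ doublyStochastic ℝ n := by
  refine mem_doublyStochastic_iff_sum.mpr ⟨fun i j => sq_nonneg _, fun i => ?_, fun j => ?_⟩
  · have := congrFun₂ (mem_unitaryGroup_iff.mp hW) i i
    simp only [mul_apply, star_apply, RCLike.star_def, RCLike.mul_conj, one_apply_eq] at this
    exact_mod_cast this
  · have := congrFun₂ (mem_unitaryGroup_iff'.mp hW) j j
    simp only [mul_apply, star_apply, RCLike.star_def, RCLike.conj_mul, one_apply_eq] at this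
    exact_mod_cast this

variable {A : Matrix n n 𝕜}

theorem star_eigenvectorUnitary_mul_mul_eigenvectorUnitary (hA : A.IsHermitian) :
    star (hA.eigenvectorUnitary : Matrix n n 𝕜) * A * (hA.eigenvectorUnitary : Matrix n n 𝕜) =
      diagonal (RCLike.ofReal ∘ hA.eigenvalues) := by
  rw [← Unitary.conjStarAlgAut_star_apply (S := 𝕜), hA.conjStarAlgAut_star_eigenvectorUnitary]

theorem exists_mem_doublyStochastic_diag_conj_eq (hA : A.IsHermitian) {V : Matrix n n 𝕜}
    (hV : V ∈ unitaryGroup n 𝕜) :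
    ∃ D ∈ doublyStochastic ℝ n,
      ∀ i, (star V * A * V) i i = ((D *ᵥ hA.eigenvalues) i : 𝕜) := by
  set U := hA.eigenvectorUnitary
  set W := star V * (U : Matrix n n 𝕜) with W_def
  have hW : W ∈ unitaryGroup n 𝕜 := mul_mem (Unitary.star_mem hV) U.2
  refine ⟨_, map_norm_sq_mem_doublyStochastic hW, fun i => ?_⟩
  have conj_eq : star V * A * V = W * diagonal (RCLike.ofReal ∘ hA.eigenvalues) * star W := by
    conv_lhs => rw [hA.spectral_theorem, Unitary.conjStarAlgAut_apply]
    simp only [W_def, star_mul, star_star, mul_assoc, U]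
  rw [conj_eq, mul_apply]
  simp only [mul_diagonal, star_apply, mulVec, dotProduct, map_apply, Function.comp_apply]
  push_cast
  refine sum_congr rfl fun j _ => ?_
  rw [← RCLike.mul_conj, RCLike.star_def]
  ring

theorem card_pos_add_card_neg_eigenvalues (hA : A.IsHermitian) :
    #{i | 0 < hA.eigenvalues i} + #{i | hA.eigenvalues i < 0} = A.rank := by
  rw [hA.rank_eq_card_non_zero_eigs, Fintype.card_subtype, ← card_union_of_disjoint, ← filter_or]
  · simp only [ne_iff_lt_or_gt, or_comm]
  · exact disjoint_filter.mpr fun _ _ => lt_asymm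

end Hermitian

section PartialTrace

variable {d1 d2 : ℕ} (C : Matrix (Fin d1 × Fin d2) (Fin d1 × Fin d2) ℂ)

theorem trace_ptrace1_mul (X : Matrix (Fin d2) (Fin d2) ℂ) :
    (ptrace1 C * X).trace = (C * (1 ⊗ₖ X)).trace := by
  calc (ptrace1 C * X).trace = ∑ s, ∑ t, ∑ i, C (i, s) (i, t) * X t s := by
        simp only [trace, diag_apply, mul_apply, ptrace1, of_apply, sum_mul]
    _ = ∑ i, ∑ s, ∑ t, C (i, s) (i, t) * X t s := by
        rw [sum_comm_cycle]
    _ = _ := by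
        simp only [trace, diag_apply, mul_apply, Fintype.sum_prod_type, kroneckerMap_apply]
        simp [one_apply, sum_ite_irrel]

theorem trace_ptrace2_mul (X : Matrix (Fin d1) (Fin d1) ℂ) :
    (ptrace2 C * X).trace = (C * (X ⊗ₖ 1)).trace := by
  calc (ptrace2 C * X).trace = ∑ i, ∑ j, ∑ s, C (i, s) (j, s) * X j i := by
        simp only [trace, diag_apply, mul_apply, ptrace2, of_apply, sum_mul]
    _ = ∑ i, ∑ s, ∑ j, C (i, s) (j, s) * X j i := sum_congr rfl fun _ _ => sum_comm
    _ = _ := by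
        simp only [trace, diag_apply, mul_apply, Fintype.sum_prod_type, kroneckerMap_apply]
        simp [one_apply]

variable {P : Matrix (Fin d1) (Fin d1) ℂ} {Q : Matrix (Fin d2) (Fin d2) ℂ}

theorem ptrace1_conj_kronecker (hP : P ∈ unitaryGroup (Fin d1) ℂ) :
    ptrace1 (star (P ⊗ₖ Q) * C * (P ⊗ₖ Q)) = star Q * ptrace1 C * Q := by
  refine ext_iff_trace_mul_right.mpr fun X => ?_
  calc (ptrace1 (star (P ⊗ₖ Q) * C * (P ⊗ₖ Q)) * X).trace
      = (C * ((P ⊗ₖ Q) * (1 ⊗ₖ X) * star (P ⊗ₖ Q))).trace := by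
        rw [trace_ptrace1_mul, mul_assoc, mul_assoc, trace_mul_comm]
        simp only [mul_assoc]
    _ = (C * (1 ⊗ₖ (Q * X * star Q))).trace := by
        rw [star_eq_conjTranspose, conjTranspose_kronecker, ← mul_kronecker_mul,
          ← mul_kronecker_mul, mul_one, ← star_eq_conjTranspose, mem_unitaryGroup_iff.mp hP,
          star_eq_conjTranspose]
    _ = (star Q * ptrace1 C * Q * X).trace := by
        rw [← trace_ptrace1_mul, ← mul_assoc, trace_mul_comm]
        simp only [mul_assoc]

theorem ptrace2_conj_kronecker (hQ : Q ∈ unitaryGroup (Fin d2) ℂ) :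
    ptrace2 (star (P ⊗ₖ Q) * C * (P ⊗ₖ Q)) = star P * ptrace2 C * P := by
  refine ext_iff_trace_mul_right.mpr fun X => ?_
  calc (ptrace2 (star (P ⊗ₖ Q) * C * (P ⊗ₖ Q)) * X).trace
      = (C * ((P ⊗ₖ Q) * (X ⊗ₖ 1) * star (P ⊗ₖ Q))).trace := by
        rw [trace_ptrace2_mul, mul_assoc, mul_assoc, trace_mul_comm]
        simp only [mul_assoc]
    _ = (C * ((P * X * star P) ⊗ₖ 1)).trace := by
        rw [star_eq_conjTranspose, conjTranspose_kronecker, ← mul_kronecker_mul,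
          ← mul_kronecker_mul, mul_one, ← star_eq_conjTranspose Q, mem_unitaryGroup_iff.mp hQ,
          star_eq_conjTranspose]
    _ = (star P * ptrace2 C * P * X).trace := by
        rw [← trace_ptrace2_mul, ← mul_assoc, trace_mul_comm]
        simp only [mul_assoc]

variable {C}

theorem exists_mem_doublyStochastic_eigenvalues_ptrace_eq (hC : C.IsHermitian)
    (htr1 : (ptrace1 C).IsHermitian) (htr2 : (ptrace2 C).IsHermitian) :
    ∃ D ∈ doublyStochastic ℝ (Fin d1 × Fin d2),
      Sum.elim htr1.eigenvalues htr2.eigenvalues = marginals (D *ᵥ hC.eigenvalues) := by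
  let P : Matrix (Fin d1) (Fin d1) ℂ := htr2.eigenvectorUnitary
  let Q : Matrix (Fin d2) (Fin d2) ℂ := htr1.eigenvectorUnitary
  have hP : P ∈ unitaryGroup (Fin d1) ℂ := htr2.eigenvectorUnitary.2
  have hQ : Q ∈ unitaryGroup (Fin d2) ℂ := htr1.eigenvectorUnitary.2
  obtain ⟨D, hD, diag_eq⟩ :=
    exists_mem_doublyStochastic_diag_conj_eq hC (kronecker_mem_unitary hP hQ)
  have ptrace1_eq := ptrace1_conj_kronecker (Q := Q) C hP
  have ptrace2_eq := ptrace2_conj_kronecker (P := P) C hQ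
  rw [star_eigenvectorUnitary_mul_mul_eigenvectorUnitary htr1] at ptrace1_eq
  rw [star_eigenvectorUnitary_mul_mul_eigenvectorUnitary htr2] at ptrace2_eq
  refine ⟨D, hD, ?_⟩
  ext (s | i)
  · have := congrFun₂ ptrace1_eq s s
    simp only [ptrace1, of_apply, diag_eq, diagonal_apply_eq, Function.comp_apply] at this
    exact_mod_cast this.symm
  · have := congrFun₂ ptrace2_eq i i
    simp only [ptrace2, of_apply, diag_eq, diagonal_apply_eq, Function.comp_apply] at this
    exact_mod_cast this.symm

end PartialTrace

theorem sufficient_rank_three_different_dimensions_general (d1 d2 : ℕ) (hd1 : 2 ≤ d1)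
    (C : Matrix (Fin d1 × Fin d2) (Fin d1 × Fin d2) ℂ) (hC : C.IsHermitian)
    (hpos : #{i | 0 < hC.eigenvalues i} ≤ 3) (hneg : #{i | hC.eigenvalues i < 0} ≤ 3)
    (hrank : C.rank ≤ d2)
    (htr1 : (ptrace1 C).IsHermitian) (htr2 : (ptrace2 C).IsHermitian)
    (μ : Fin (d1 * d2) → ℝ) (hμ : Antitone μ)
    (g : Fin (d1 * d2) ≃ Fin d1 × Fin d2) (hg : ∀ k, μ k = hC.eigenvalues (g k)) :
    Majorizes (Sum.elim htr1.eigenvalues htr2.eigenvalues)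
      (Sum.elim (fun s : Fin d2 => ∑ i : Fin d1, μ (finProdFinEquiv (i, s)))
                (fun j : Fin d1 => ∑ s : Fin d2, μ (finProdFinEquiv (j, s)))) := by
  have card_pos : #{k | 0 < μ k} = #{i | 0 < hC.eigenvalues i} := card_equiv g (by simp [hg])
  have card_neg : #{k | μ k < 0} = #{i | hC.eigenvalues i < 0} := card_equiv g (by simp [hg])
  rw [← card_pos] at hpos
  rw [← card_neg] at hneg
  rw [← card_pos_add_card_neg_eigenvalues hC, ← card_pos, ← card_neg] at hrank
  obtain ⟨D, hD, hDC⟩ := exists_mem_doublyStochastic_eigenvalues_ptrace_eq hC htr1 htr2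
  let σ : Equiv.Perm (Fin d1 × Fin d2) := g.symm.trans finProdFinEquiv.symm
  have eigenvalues_eq : hC.eigenvalues = σ.permMatrix ℝ *ᵥ (μ ∘ finProdFinEquiv) := by
    ext z
    simp only [permMatrix_mulVec, Function.comp_apply, σ, Equiv.trans_apply,
      Equiv.apply_symm_apply, hg]
  rw [hDC, eigenvalues_eq, mulVec_mulVec]
  exact majorizes_marginals_mulVec_of_antitone hd1 hμ hpos hneg hrank
    (mul_mem hD permMatrix_mem_doublyStochastic)

theorem sufficient_rank_three_different_dimensions (d1 d2 : ℕ) (hd1 : 2 ≤ d1) (hdd : d1 < d2)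
    (C : Matrix (Fin d1 × Fin d2) (Fin d1 × Fin d2) ℂ) (hC : C.IsHermitian)
    (hrank : C.rank ≤ 3)
    (htr1 : (ptrace1 C).IsHermitian) (htr2 : (ptrace2 C).IsHermitian)
    -- `μ` lists the eigenvalues of `C` in decreasing order
    (μ : Fin (d1 * d2) → ℝ) (hμ : Antitone μ)
    (g : Fin (d1 * d2) ≃ Fin d1 × Fin d2) (hg : ∀ k, μ k = hC.eigenvalues (g k)) :
    Majorizes (Sum.elim htr1.eigenvalues htr2.eigenvalues)
      (Sum.elim (fun s : Fin d2 => ∑ i : Fin d1, μ (finProdFinEquiv (i, s)))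
                (fun j : Fin d1 => ∑ s : Fin d2, μ (finProdFinEquiv (j, s)))) := by
  have := card_pos_add_card_neg_eigenvalues hC
  exact sufficient_rank_three_different_dimensions_general d1 d2 hd1 C hC (by omega) (by omega)
    (by omega) htr1 htr2 μ hμ g hg
end
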